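/- Let n ≥ 2, let R = MvPowerSeries (Fin n) ℂ, and let f ∈ R be nonzero, a non-unit, and squarefree. Let J be the Jacobian ideal of f, namely the ideal of R generated by f together with all elements θ f for θ ∈ Derivation ℂ R R. If J is generated by a regular sequence of length 2 (i.e., there exist g, h ∈ R with J = Ideal.span {g, h}, g a nonzerodivisor on R, and h a nonzerodivisor on R ⧸ (g)), then the module of logarithmic derivations Der(−log f) is a free R-module of rank n. -/

import Mathlib

/-- Evaluation of a derivation at a fixed element `f`, as an `R`-linear map. -/
noncomputable def derEval {R : Type*} [CommRing R] [Algebra ℂ R] (f : R) :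
    Derivation ℂ R R →ₗ[R] R where
  toFun θ := θ f
  map_add' _ _ := Derivation.add_apply f
  map_smul' r θ := Derivation.smul_apply f r θ

/-- The module of logarithmic derivations `Der(−log f)`:
the `R`-submodule of derivations `θ` with `θ f ∈ (f)`. -/
noncomputable def logDer {R : Type*} [CommRing R] [Algebra ℂ R] (f : R) :
    Submodule R (Derivation ℂ R R) :=
  Submodule.comap (derEval f) (Ideal.span {f})

open MvPowerSeries in
/-- Hadamard-type decomposition of a power series in finitely many variables. -/
theorem mvps_decomp {n : ℕ} (f : MvPowerSeries (Fin n) ℂ) :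
    ∃ F : Fin n → MvPowerSeries (Fin n) ℂ, f = C (constantCoeff f) + ∑ i, X i * F i := by
  classical
  have hp : ∀ m : Fin n →₀ ℕ, m ≠ 0 → ∃ i, m i ≠ 0 := fun m hm => by
    by_contra! h
    exact hm (Finsupp.ext h)
  rcases isEmpty_or_nonempty (Fin n) with hE | hE
  · refine ⟨fun _ => 0, ?_⟩
    ext m
    obtain rfl : m = 0 := Subsingleton.elim _ _
    simp
  choose! p hp using hp
  obtain ⟨F, hF⟩ : ∃ F : Fin n → MvPowerSeries (Fin n) ℂ, ∀ i m, coeff m (F i) =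
      if p (m + Finsupp.single i 1) = i then coeff (m + Finsupp.single i 1) f else 0 :=
    ⟨fun i m => if p (m + Finsupp.single i 1) = i then
      coeff (m + Finsupp.single i 1) f else 0, fun i m => rfl⟩
  refine ⟨F, ?_⟩
  ext m
  rw [map_add, map_sum, coeff_C]
  simp only [X_def, coeff_monomial_mul, one_mul, hF]
  by_cases hm : m = 0
  · subst hm
    simp
  · rw [if_neg hm, zero_add, Finset.sum_eq_single (p m)]
    · have h1 : Finsupp.single (p m) 1 ≤ m := by
        rw [Finsupp.single_le_iff]
        exact Nat.one_le_iff_ne_zero.2 (hp m hm)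
      rw [if_pos h1, tsub_add_cancel_of_le h1, if_pos rfl]
    · intro i _ hi
      by_cases h1 : Finsupp.single i 1 ≤ m
      · rw [if_pos h1, tsub_add_cancel_of_le h1, if_neg (Ne.symm hi)]
      · rw [if_neg h1]
    · simp

open MvPowerSeries in
/-- A derivation of the power series ring vanishing on the variables is zero. -/
theorem der_eq_zero {n : ℕ}
    (θ : Derivation ℂ (MvPowerSeries (Fin n) ℂ) (MvPowerSeries (Fin n) ℂ))
    (h : ∀ i, θ (X i) = 0) : θ = 0 := by
  classical
  have key : ∀ k : ℕ, ∀ (f : MvPowerSeries (Fin n) ℂ) (m : Fin n →₀ ℕ),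
      m.degree < k → coeff m (θ f) = 0 := by
    intro k
    induction k with
    | zero => intro f m hm; omega
    | succ k ih =>
      intro f m hm
      obtain ⟨F, hF⟩ := mvps_decomp f
      rw [hF, map_add, map_sum, c_eq_algebraMap, Derivation.map_algebraMap, zero_add, map_sum]
      refine Finset.sum_eq_zero fun i _ => ?_
      rw [Derivation.leibniz, h i, smul_zero, add_zero, smul_eq_mul, X_def, coeff_monomial_mul]
      split_ifs with h1
      · rw [one_mul]
        apply ih
        have h2 : (m - Finsupp.single i 1 + Finsupp.single i 1).degree = m.degree := by
          rw [tsub_add_cancel_of_le h1]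
        rw [map_add, Finsupp.degree_single] at h2
        omega
      · rfl
  ext f m
  exact key _ f m (Nat.lt_succ_self _)

open MvPowerSeries in
/-- Derivations of the power series ring form a free module on the partial derivatives. -/
noncomputable def derEquiv (n : ℕ) :
    Derivation ℂ (MvPowerSeries (Fin n) ℂ) (MvPowerSeries (Fin n) ℂ) ≃ₗ[MvPowerSeries (Fin n) ℂ]
      (Fin n → MvPowerSeries (Fin n) ℂ) :=
  LinearEquiv.ofBijective
    { toFun := fun θ i => θ (X i)
      map_add' := fun _ _ => rfl
      map_smul' := fun _ _ => rfl } (by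
    classical
    constructor
    · rw [injective_iff_map_eq_zero]
      intro θ hθ
      exact der_eq_zero θ fun i => congrFun hθ i
    · intro a
      refine ⟨∑ j, a j • pderiv ℂ j, ?_⟩
      funext i
      change (∑ j, a j • pderiv ℂ j :
        Derivation ℂ (MvPowerSeries (Fin n) ℂ) (MvPowerSeries (Fin n) ℂ)) (X i) = a i
      rw [← Derivation.coeFnAddMonoidHom_apply, map_sum, Finset.sum_apply,
        Finset.sum_eq_single i]
      · simp [pderiv_X_self]
      · intro j _ hj
        simp [pderiv_X_of_ne hj.symm]
      · simp)

/-- The kernel of a map from a projective module onto an ideal generated by a regular sequence of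
length two is projective, and finite if the source is (Schanuel). -/
theorem ker_projective {R F : Type*} [CommRing R] [AddCommGroup F] [Module R F]
    [Module.Projective R F] [Module.Finite R F] (φ : F →ₗ[R] R) (g h : R)
    (hr : LinearMap.range φ = Ideal.span {g, h})
    (hg : ∀ x, g * x = 0 → x = 0)
    (hh : ∀ b, g ∣ h * b → g ∣ b) :
    Module.Projective R (LinearMap.ker φ) ∧ Module.Finite R (LinearMap.ker φ) := by
  let π : R × R →ₗ[R] R := (LinearMap.toSpanSingleton R R g).coprod
    (LinearMap.toSpanSingleton R R h)
  have hπ : ∀ a b, π (a, b) = a * g + b * h := fun a b => by simp [π]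
  obtain ⟨u, hu⟩ : g ∈ LinearMap.range φ := hr ▸ Ideal.subset_span (by simp)
  obtain ⟨v, hv⟩ : h ∈ LinearMap.range φ := hr ▸ Ideal.subset_span (by simp)
  let β : R × R →ₗ[R] F := (LinearMap.toSpanSingleton R F u).coprod
    (LinearMap.toSpanSingleton R F v)
  have hβ : ∀ z, φ (β z) = π z := fun z => by simp [π, β, hu, hv]
  have hrange : ∀ x, φ x ∈ LinearMap.range π := fun x => by
    have : φ x ∈ Ideal.span {g, h} := hr ▸ LinearMap.mem_range_self φ x
    obtain ⟨a, b, hab⟩ := Ideal.mem_span_pair.1 this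
    exact ⟨(a, b), by rw [hπ, hab]⟩
  obtain ⟨α, hα⟩ := Module.projective_lifting_property π.rangeRestrict
    (φ.codRestrict (LinearMap.range π) hrange) π.surjective_rangeRestrict
  have hα' : ∀ x, π (α x) = φ x := fun x => by
    have := congrArg Subtype.val (LinearMap.congr_fun hα x)
    simpa using this
  let κ : R →ₗ[R] LinearMap.ker π := (LinearMap.toSpanSingleton R (R × R) (-h, g)).codRestrict _
    (fun c => by
      rw [LinearMap.mem_ker, LinearMap.toSpanSingleton_apply, Prod.smul_mk, hπ]
      simp only [smul_eq_mul]
      ring)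
  have hκ : Function.Bijective κ := by
    constructor
    · rw [injective_iff_map_eq_zero]
      intro c hc
      have := congrArg (fun z : LinearMap.ker π => (z : R × R).2) hc
      simp [κ] at this
      exact hg c (by rw [mul_comm]; exact this)
    · rintro ⟨⟨a, b⟩, hab⟩
      rw [LinearMap.mem_ker, hπ] at hab
      obtain ⟨c, rfl⟩ := hh b ⟨-a, by linear_combination hab⟩
      have ha : a + c * h = 0 := hg _ (by linear_combination hab)
      refine ⟨c, Subtype.ext ?_⟩
      simp only [κ, LinearMap.codRestrict_apply, LinearMap.toSpanSingleton_apply, Prod.smul_mk,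
        smul_eq_mul, Prod.mk.injEq]
      exact ⟨by linear_combination -ha, mul_comm _ _⟩
  let e := LinearEquiv.ofBijective κ hκ
  have : Module.Projective R (LinearMap.ker π) := Module.Projective.of_equiv e
  have : Module.Finite R (LinearMap.ker π) := Module.Finite.equiv e
  let i : LinearMap.ker φ →ₗ[R] F × LinearMap.ker π :=
    (LinearMap.ker φ).subtype.prod ((α.comp (LinearMap.ker φ).subtype).codRestrict _ (fun k => by
      rw [LinearMap.mem_ker, LinearMap.comp_apply, hα']
      exact k.2))
  let p : F × LinearMap.ker π →ₗ[R] LinearMap.ker φ :=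
    ((LinearMap.id - β.comp α).coprod (β.comp (LinearMap.ker π).subtype)).codRestrict _ (by
      rintro ⟨x, z, hz⟩
      rw [LinearMap.mem_ker] at hz ⊢
      simp [hβ, hα', hz])
  have hpi : p.comp i = LinearMap.id := by
    ext k
    simp [p, i]
  refine ⟨Module.Projective.of_split i p hpi, Module.Finite.of_surjective p fun k => ⟨i k, ?_⟩⟩
  exact LinearMap.congr_fun hpi k

theorem logDer_free_general {R : Type*} [CommRing R] [Algebra ℂ R] [IsDomain R] [IsLocalRing R]
    [Module.Free R (Derivation ℂ R R)] [Module.Finite R (Derivation ℂ R R)]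
    (f g h : R) (hf0 : f ≠ 0) (J : Ideal R)
    (hJ : J = Ideal.span ({f} ∪ { k : R | ∃ θ : Derivation ℂ R R, θ f = k }))
    (hJ2 : J = Ideal.span {g, h})
    (hg : ∀ x : R, g * x = 0 → x = 0)
    (hh : ∀ y : R ⧸ Ideal.span {g}, Ideal.Quotient.mk (Ideal.span {g}) h * y = 0 → y = 0) :
    Module.Free R (logDer f) ∧
      Module.rank R (logDer f) = Module.rank R (Derivation ℂ R R) := by
  let φ : R × (Derivation ℂ R R) →ₗ[R] R := (LinearMap.toSpanSingleton R R f).coprod (derEval f)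
  have hφ : ∀ a θ, φ (a, θ) = a * f + θ f := fun a θ => by simp [φ, derEval]
  have hr : LinearMap.range φ = Ideal.span {g, h} := by
    rw [← hJ2, hJ]
    apply le_antisymm
    · rintro _ ⟨⟨a, θ⟩, rfl⟩
      rw [hφ]
      exact Ideal.add_mem _ (Ideal.mul_mem_left _ _ (Ideal.subset_span (Or.inl rfl)))
        (Ideal.subset_span (Or.inr ⟨θ, rfl⟩))
    · refine Submodule.span_le.2 ?_
      rintro k (hk | ⟨θ, rfl⟩)
      · rw [Set.mem_singleton_iff] at hk
        exact ⟨(1, 0), by rw [hφ, hk, Derivation.zero_apply]; simp⟩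
      · exact ⟨(0, θ), by rw [hφ]; simp⟩
  have hh' : ∀ b, g ∣ h * b → g ∣ b := fun b hb => by
    rw [← Ideal.mem_span_singleton, ← Ideal.Quotient.eq_zero_iff_mem] at hb ⊢
    rw [map_mul] at hb
    exact hh _ hb
  obtain ⟨hP, hF⟩ := ker_projective φ g h hr hg hh'
  let q : LinearMap.ker φ →ₗ[R] logDer f :=
    ((LinearMap.snd R R (Derivation ℂ R R)).comp (LinearMap.ker φ).subtype).codRestrict _ (by
      rintro ⟨⟨a, θ⟩, hk⟩
      rw [LinearMap.mem_ker, hφ] at hk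
      change θ f ∈ Ideal.span {f}
      rw [Ideal.mem_span_singleton]
      exact ⟨-a, by linear_combination hk⟩)
  have hq : Function.Bijective q := by
    constructor
    · rw [injective_iff_map_eq_zero]
      rintro ⟨⟨a, θ⟩, hk⟩ h0
      have h1 : θ = 0 := congrArg Subtype.val h0
      subst h1
      rw [LinearMap.mem_ker, hφ, Derivation.zero_apply] at hk
      have : a = 0 := by simpa [hf0] using hk
      subst this
      rfl
    · rintro ⟨θ, hθ⟩
      obtain ⟨c, hc⟩ := Ideal.mem_span_singleton.1 (show θ f ∈ Ideal.span {f} from hθ)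
      exact ⟨⟨(-c, θ), by rw [LinearMap.mem_ker, hφ, hc]; ring⟩, rfl⟩
  let e := LinearEquiv.ofBijective q hq
  have : Module.Projective R (logDer f) := Module.Projective.of_equiv e
  have : Module.Finite R (logDer f) := Module.Finite.equiv e
  refine ⟨Module.free_of_flat_of_isLocalRing, le_antisymm ?_ ?_⟩
  · exact Submodule.rank_le _
  · let s : (Derivation ℂ R R) →ₗ[R] logDer f := (LinearMap.lsmul R (Derivation ℂ R R) f).codRestrict _ (fun θ => by
      change f * θ f ∈ Ideal.span {f}
      exact Ideal.mul_mem_right _ _ (Ideal.mem_span_singleton_self f))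
    refine LinearMap.rank_le_of_injective s ?_
    rw [injective_iff_map_eq_zero]
    intro θ hθ
    have h1 : f • θ = 0 := congrArg Subtype.val hθ
    exact (smul_eq_zero.1 h1).resolve_left hf0

theorem logDer_free_of_jacobian_complete_intersection (n : ℕ) (hn : 2 ≤ n)
    (f : MvPowerSeries (Fin n) ℂ) (hf0 : f ≠ 0) (hfu : ¬ IsUnit f)
    (hsq : Squarefree f)
    (J : Ideal (MvPowerSeries (Fin n) ℂ))
    (hJ : J = Ideal.span ({f} ∪ { k : MvPowerSeries (Fin n) ℂ |
      ∃ θ : Derivation ℂ (MvPowerSeries (Fin n) ℂ) (MvPowerSeries (Fin n) ℂ), θ f = k }))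
    (hreg : ∃ g h : MvPowerSeries (Fin n) ℂ,
      J = Ideal.span {g, h} ∧
      (∀ x : MvPowerSeries (Fin n) ℂ, g * x = 0 → x = 0) ∧
      (∀ y : MvPowerSeries (Fin n) ℂ ⧸ Ideal.span {g},
        Ideal.Quotient.mk (Ideal.span {g}) h * y = 0 → y = 0)) :
    Module.Free (MvPowerSeries (Fin n) ℂ) (↥(logDer f)) ∧
      Module.rank (MvPowerSeries (Fin n) ℂ) (↥(logDer f)) = n := by
  obtain ⟨g, h, hJ2, hg, hh⟩ := hreg
  have : IsDomain (MvPowerSeries (Fin n) ℂ) := NoZeroDivisors.to_isDomain _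
  have := Module.Free.of_equiv (derEquiv n).symm
  have := Module.Finite.equiv (derEquiv n).symm
  have hrankD := LinearEquiv.rank_eq (derEquiv n)
  rw [rank_fin_fun] at hrankD
  rw [← hrankD]
  exact logDer_free_general f g h hf0 J hJ hJ2 hg hh
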